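/- If DC holds and L_3 is finite, then L_k < L_{k+1} for every integer k ≥ 3. -/

import Mathlib

open Filter Topology
open scoped ENNReal

/-- `N` has the Ramsey property for the tuple `k`: every `r`-coloring of the
edges of the complete graph on `N` vertices admits a color `i` and a set of
`k i` vertices all of whose connecting edges have color `i`. -/
def ramseyProp {r : ℕ} (k : Fin r → ℕ) (N : ℕ) : Prop :=
  ∀ c : Sym2 (Fin N) → Fin r, ∃ i : Fin r, ∃ S : Finset (Fin N),
    S.card = k i ∧ ∀ u ∈ S, ∀ v ∈ S, u ≠ v → c s(u, v) = i

/-- The multicolor Ramsey number `R(k 0, …, k (r-1))`: the least positive `N`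
with the Ramsey property. -/
noncomputable def multiRamsey {r : ℕ} (k : Fin r → ℕ) : ℕ :=
  sInf {N | 0 < N ∧ ramseyProp k N}

/-- The diagonal multicolor Ramsey number `R_r(k)`. -/
noncomputable def diagRamsey (r k : ℕ) : ℕ :=
  multiRamsey (fun _ : Fin r => k)

/-- DC, the "decreasing conjecture". -/
def DC : Prop :=
  ∀ (r : ℕ), 2 ≤ r → ∀ k : Fin r → ℕ, (∀ l, 2 ≤ k l) →
    ∀ i j : Fin r, i ≠ j → 3 ≤ k i → k i ≤ k j →
      multiRamsey (fun l => if l = i then k i - 1 else if l = j then k j + 1 else k l)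
        ≤ multiRamsey k

/-- The finite multicolor Ramsey theorem, for subsets of an arbitrary vertex type. -/
theorem exists_ramsey_bound {ι : Type*} [Fintype ι] (n : ℕ) :
    ∀ k : ι → ℕ, ∑ i, k i = n → ∃ N, ∀ (V : Type) (c : Sym2 V → ι) (A : Finset V),
      N ≤ A.card → ∃ i, ∃ S ⊆ A, S.card = k i ∧ ∀ u ∈ S, ∀ v ∈ S, u ≠ v → c s(u, v) = i := by
  classical
  induction n using Nat.strong_induction_on with
  | _ n ih =>
    intro k hk
    by_cases h0 : ∃ i, k i = 0
    · obtain ⟨i, hi⟩ := h0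
      exact ⟨0, fun V c A _ => ⟨i, ∅, by simp, by simp [hi], by simp⟩⟩
    push Not at h0
    have key (i : ι) := ih (∑ j, Function.update k i (k i - 1) j) (by
      rw [← hk]
      refine Finset.sum_lt_sum (fun j _ => ?_) ⟨i, Finset.mem_univ i, ?_⟩
      · by_cases hj : j = i
        · subst hj; simp
        · simp [hj]
      · have := h0 i
        simp only [Function.update_self]; omega) _ rfl
    choose N hN using key
    refine ⟨1 + ∑ i, N i, fun V c A hA => ?_⟩
    obtain ⟨v, hv⟩ : A.Nonempty := Finset.card_pos.mp (by omega)
    obtain ⟨i, hi⟩ : ∃ i, N i ≤ ((A.erase v).filter (fun u => c s(v, u) = i)).card := by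
      by_contra! hlt
      have hcard := Finset.card_eq_sum_card_fiberwise (s := A.erase v) (t := Finset.univ)
        (f := fun u => c s(v, u)) (fun _ _ => by simp)
      have hsum := Finset.sum_lt_sum_of_nonempty (s := Finset.univ)
        ⟨c s(v, v), Finset.mem_univ _⟩ (fun i _ => hlt i)
      rw [Finset.card_erase_of_mem hv] at hcard
      omega
    obtain ⟨j, S, hSA, hScard, hS⟩ := hN i V c _ hi
    have hSA' : S ⊆ A := fun x hx => Finset.mem_of_mem_erase (Finset.mem_filter.mp (hSA hx)).1
    by_cases hj : j = i
    · subst hj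
      have hvS : v ∉ S := fun h => by simpa using hSA h
      refine ⟨j, insert v S, Finset.insert_subset hv hSA', ?_, ?_⟩
      · rw [Finset.card_insert_of_notMem hvS, hScard]
        have := h0 j
        simp only [Function.update_self]; omega
      · intro x hx y hy hxy
        rcases Finset.mem_insert.mp hx with rfl | hxS <;>
          rcases Finset.mem_insert.mp hy with rfl | hyS
        · exact absurd rfl hxy
        · exact (Finset.mem_filter.mp (hSA hyS)).2
        · rw [Sym2.eq_swap]; exact (Finset.mem_filter.mp (hSA hxS)).2
        · exact hS x hxS y hyS hxy
    · exact ⟨j, S, hSA', by simpa [hj] using hScard, hS⟩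

theorem ramseyProp_mono {r : ℕ} {k : Fin r → ℕ} {M N : ℕ} (hMN : M ≤ N)
    (h : ramseyProp k M) : ramseyProp k N := by
  intro c
  obtain ⟨i, S, hcard, hS⟩ := h (fun e => c (e.map (Fin.castLE hMN)))
  refine ⟨i, S.map (Fin.castLEEmb hMN), by simpa using hcard, ?_⟩
  intro u hu v hv huv
  obtain ⟨x, hx, rfl⟩ := Finset.mem_map.mp hu
  obtain ⟨y, hy, rfl⟩ := Finset.mem_map.mp hv
  exact hS x hx y hy (fun h => huv (by rw [h]))

theorem multiRamsey_mem {r : ℕ} (k : Fin r → ℕ) :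
    0 < multiRamsey k ∧ ramseyProp k (multiRamsey k) := by
  refine Nat.sInf_mem (s := {N | 0 < N ∧ ramseyProp k N}) ?_
  obtain ⟨N, hN⟩ := exists_ramsey_bound _ k rfl
  refine ⟨N + 1, Nat.succ_pos N, fun c => ?_⟩
  obtain ⟨i, S, -, h⟩ := hN _ c Finset.univ (by simp)
  exact ⟨i, S, h⟩

theorem lt_multiRamsey {r : ℕ} {k : Fin r → ℕ} {N : ℕ} (h : ¬ ramseyProp k N) :
    N < multiRamsey k :=
  lt_of_not_ge fun hle => h (ramseyProp_mono hle (multiRamsey_mem k).2)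

theorem not_ramseyProp_pred {r : ℕ} (k : Fin r → ℕ) (h : 0 < multiRamsey k - 1) :
    ¬ ramseyProp k (multiRamsey k - 1) := fun hp =>
  Nat.notMem_of_lt_sInf (s := {N | 0 < N ∧ ramseyProp k N}) (m := multiRamsey k - 1)
    (by change _ < multiRamsey k; omega) ⟨h, hp⟩

/-- The lexicographic product of two colorings with disjoint color sets. -/
theorem not_ramseyProp_append {r s : ℕ} {k : Fin r → ℕ} {l : Fin s → ℕ} {M N : ℕ}
    (hk : ¬ ramseyProp k M) (hl : ¬ ramseyProp l N) :
    ¬ ramseyProp (Fin.append k l) (M * N) := by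
  unfold ramseyProp at hk hl
  push Not at hk hl
  obtain ⟨c, hc⟩ := hk
  obtain ⟨d, hd⟩ := hl
  intro h
  obtain ⟨i, S, hcard, hS⟩ := h (Sym2.lift ⟨fun x y =>
    if x.divNat = y.divNat then Fin.natAdd r (d s(x.modNat, y.modNat))
    else Fin.castAdd s (c s(x.divNat, y.divNat)), fun x y => by
      simp only [eq_comm (a := x.divNat), Sym2.eq_swap (a := x.divNat),
        Sym2.eq_swap (a := x.modNat)]⟩)
  simp only [Sym2.lift_mk] at hS
  induction i using Fin.addCases with
  | left i =>
    have hne : ∀ u ∈ S, ∀ v ∈ S, u ≠ v →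
        u.divNat ≠ v.divNat ∧ c s(u.divNat, v.divNat) = i := by
      intro u hu v hv huv
      have huv' := hS u hu v hv huv
      split_ifs at huv' with he
      · simp [Fin.ext_iff] at huv'
        omega
      · exact ⟨he, by simpa using huv'⟩
    have hinj : Set.InjOn (fun x : Fin (M * N) => x.divNat) S := fun u hu v hv he =>
      by_contra fun huv => (hne u hu v hv huv).1 he
    obtain ⟨x, hx, y, hy, hxy, hcol⟩ := hc i (S.image fun x => x.divNat)
      (by rw [Finset.card_image_of_injOn hinj, hcard, Fin.append_left])
    obtain ⟨u, hu, rfl⟩ := Finset.mem_image.mp hx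
    obtain ⟨v, hv, rfl⟩ := Finset.mem_image.mp hy
    exact hcol (hne u hu v hv (fun h => hxy (by rw [h]))).2
  | right i =>
    have heq : ∀ u ∈ S, ∀ v ∈ S, u ≠ v →
        u.divNat = v.divNat ∧ d s(u.modNat, v.modNat) = i := by
      intro u hu v hv huv
      have huv' := hS u hu v hv huv
      split_ifs at huv' with he
      · exact ⟨he, by simpa using huv'⟩
      · simp [Fin.ext_iff] at huv'
        omega
    have hinj : Set.InjOn (fun x : Fin (M * N) => x.modNat) S := fun u hu v hv he =>
      by_contra fun huv => huv
        (finProdFinEquiv.symm.injective (Prod.ext (heq u hu v hv huv).1 he))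
    obtain ⟨x, hx, y, hy, hxy, hcol⟩ := hd i (S.image fun x => x.modNat)
      (by rw [Finset.card_image_of_injOn hinj, hcard, Fin.append_right])
    obtain ⟨u, hu, rfl⟩ := Finset.mem_image.mp hx
    obtain ⟨v, hv, rfl⟩ := Finset.mem_image.mp hy
    exact hcol (heq u hu v hv (fun h => hxy (by rw [h]))).2

theorem pred_mul_pred_lt_multiRamsey_append {r s : ℕ} (k : Fin r → ℕ) (l : Fin s → ℕ) :
    (multiRamsey k - 1) * (multiRamsey l - 1) < multiRamsey (Fin.append k l) := by
  rcases Nat.eq_zero_or_pos (multiRamsey k - 1) with h | hk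
  · rw [h, zero_mul]; exact (multiRamsey_mem _).1
  rcases Nat.eq_zero_or_pos (multiRamsey l - 1) with h | hl
  · rw [h, mul_zero]; exact (multiRamsey_mem _).1
  exact lt_multiRamsey (not_ramseyProp_append (not_ramseyProp_pred k hk) (not_ramseyProp_pred l hl))

theorem append_const {r s k : ℕ} :
    Fin.append (fun _ : Fin r => k) (fun _ : Fin s => k) = fun _ => k := by
  funext i
  induction i using Fin.addCases <;> simp

theorem le_diagRamsey_one (k : ℕ) : k ≤ diagRamsey 1 k := by
  obtain ⟨i, S, hcard, -⟩ := (multiRamsey_mem (fun _ : Fin 1 => k)).2 (fun _ => 0)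
  exact hcard.symm.le.trans <| (Finset.card_le_univ S).trans_eq (Fintype.card_fin _)

theorem pow_lt_diagRamsey (k r : ℕ) : k ^ (r + 1) < diagRamsey (r + 1) (k + 1) := by
  induction r with
  | zero => simpa using le_diagRamsey_one (k + 1)
  | succ r ih =>
    have h := pred_mul_pred_lt_multiRamsey_append (fun _ : Fin (r + 1) => k + 1)
      (fun _ : Fin 1 => k + 1)
    rw [append_const] at h
    change (diagRamsey (r + 1) (k + 1) - 1) * (diagRamsey 1 (k + 1) - 1) < _ at h
    refine lt_of_le_of_lt ?_ h
    rw [pow_succ]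
    have := le_diagRamsey_one (k + 1)
    exact Nat.mul_le_mul (by omega) (by omega)

/-- Under DC, moving one unit in each of `a` disjoint pairs of equal entries does not increase
the Ramsey number. -/
theorem DC.multiRamsey_append_le (hDC : DC) {k : ℕ} (hk : 2 ≤ k) (a : ℕ) :
    multiRamsey (Fin.append (fun _ : Fin a => k) (fun _ : Fin a => k + 2))
      ≤ diagRamsey (a + a) (k + 1) := by
  have key : ∀ t ≤ a, multiRamsey (Fin.append (fun i : Fin a => if i.val < t then k else k + 1)
      (fun i : Fin a => if i.val < t then k + 2 else k + 1)) ≤ diagRamsey (a + a) (k + 1) := by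
    intro t
    induction t with
    | zero => intro _; simp [append_const, diagRamsey]
    | succ t ih =>
      intro ht
      refine le_trans ?_ (ih (by omega))
      have h := hDC (a + a) (by omega)
        (Fin.append (fun i : Fin a => if i.val < t then k else k + 1)
          (fun i : Fin a => if i.val < t then k + 2 else k + 1))
        (fun l => by
          induction l using Fin.addCases <;> simp only [Fin.append_left, Fin.append_right] <;>
            split_ifs <;> omega)
        (Fin.castAdd a ⟨t, ht⟩) (Fin.natAdd a ⟨t, ht⟩)
        (by simp [Fin.ext_iff]; omega) (by simp only [Fin.append_left, lt_irrefl, if_false]; omega)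
        (by simp only [Fin.append_left, Fin.append_right, lt_irrefl, if_false, le_refl])
      refine le_trans (le_of_eq (congrArg multiRamsey ?_)) h
      funext l
      induction l using Fin.addCases with
      | left l =>
        simp only [Fin.append_left, Fin.append_right, Fin.ext_iff, Fin.val_castAdd, Fin.val_natAdd]
        split_ifs <;> omega
      | right l =>
        simp only [Fin.append_left, Fin.append_right, Fin.ext_iff, Fin.val_castAdd, Fin.val_natAdd]
        split_ifs <;> omega
  simpa using key a le_rfl

theorem DC.diagRamsey_mul_le (hDC : DC) {k : ℕ} (hk : 2 ≤ k) {a : ℕ} (ha : a ≠ 0) :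
    diagRamsey a k * diagRamsey a (k + 2) ≤ 4 * diagRamsey (a + a) (k + 1) := by
  have h := (pred_mul_pred_lt_multiRamsey_append (fun _ : Fin a => k)
    (fun _ : Fin a => k + 2)).trans_le (hDC.multiRamsey_append_le hk a)
  change (diagRamsey a k - 1) * (diagRamsey a (k + 2) - 1) < _ at h
  have two_le : ∀ j, 2 ≤ j → 2 ≤ diagRamsey a j := fun j hj => by
    obtain ⟨b, rfl⟩ := Nat.exists_eq_succ_of_ne_zero ha
    obtain ⟨m, rfl⟩ : ∃ m, j = m + 1 := ⟨j - 1, by omega⟩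
    have h1 := pow_lt_diagRamsey m b
    have h2 : 0 < m ^ (b + 1) := Nat.pow_pos (by omega)
    change 2 ≤ diagRamsey (b + 1) (m + 1)
    omega
  obtain ⟨x, hx⟩ := Nat.exists_eq_add_of_le (two_le k hk)
  obtain ⟨y, hy⟩ := Nat.exists_eq_add_of_le (two_le (k + 2) (by omega))
  rw [hx, hy] at h ⊢
  rw [show 2 + x - 1 = x + 1 by omega, show 2 + y - 1 = y + 1 by omega] at h
  nlinarith [Nat.zero_le (x * y)]

theorem natCast_le_of_tendsto_diagRamsey {k : ℕ} {l : ℝ≥0∞}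
    (h : Tendsto (fun r : ℕ => (diagRamsey r (k + 1) : ℝ≥0∞) ^ (1 / (r : ℝ))) atTop (𝓝 l)) :
    (k : ℝ≥0∞) ≤ l := by
  refine ge_of_tendsto h ?_
  filter_upwards [eventually_ne_atTop 0] with r hr
  obtain ⟨b, rfl⟩ := Nat.exists_eq_succ_of_ne_zero hr
  calc (k : ℝ≥0∞) = (((k ^ (b + 1) : ℕ) : ℝ≥0∞)) ^ (1 / ((b + 1 : ℕ) : ℝ)) := by
        rw [Nat.cast_pow, one_div, ENNReal.pow_rpow_inv_natCast hr]
    _ ≤ _ := ENNReal.rpow_le_rpow (by exact_mod_cast (pow_lt_diagRamsey k b).le) (by positivity)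

/-- Under DC, the sequence of growth rates is log-concave. -/
theorem DC.mul_le_sq (hDC : DC) {k : ℕ} (hk : 2 ≤ k) {x y z : ℝ≥0∞}
    (hx : Tendsto (fun r : ℕ => (diagRamsey r k : ℝ≥0∞) ^ (1 / (r : ℝ))) atTop (𝓝 x))
    (hy : Tendsto (fun r : ℕ => (diagRamsey r (k + 1) : ℝ≥0∞) ^ (1 / (r : ℝ))) atTop (𝓝 y))
    (hz : Tendsto (fun r : ℕ => (diagRamsey r (k + 2) : ℝ≥0∞) ^ (1 / (r : ℝ))) atTop (𝓝 z)) :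
    x * z ≤ y ^ 2 := by
  have hx0 : x ≠ 0 := by
    obtain ⟨m, rfl⟩ : ∃ m, k = m + 1 := ⟨k - 1, by omega⟩
    have h := natCast_le_of_tendsto_diagRamsey hx
    rintro rfl
    simp at h
    omega
  have hz0 : z ≠ 0 := by
    have h := natCast_le_of_tendsto_diagRamsey (k := k + 1) hz
    rintro rfl
    simp at h
  have hdouble : Tendsto (fun a : ℕ => a + a) atTop atTop :=
    tendsto_atTop_mono (fun a => Nat.le_add_left a a) tendsto_id
  have hy2 := (ENNReal.continuous_pow 2).tendsto y |>.comp (hy.comp hdouble)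
  have h4 : Tendsto (fun a : ℕ => (4 : ℝ≥0∞) ^ (1 / (a : ℝ))) atTop (𝓝 1) := by
    have h := (Real.continuous_const_rpow (a := 4) (by norm_num)).tendsto 0 |>.comp
      (tendsto_one_div_atTop_nhds_zero_nat (𝕜 := ℝ))
    rw [Real.rpow_zero] at h
    have h' := ENNReal.tendsto_ofReal h
    rw [ENNReal.ofReal_one] at h'
    refine h'.congr fun a => ?_
    simp only [Function.comp_apply]
    rw [← ENNReal.ofReal_rpow_of_pos (by norm_num), ENNReal.ofReal_ofNat]
  have hr := ENNReal.Tendsto.mul h4 (Or.inl one_ne_zero) hy2 (Or.inr ENNReal.one_ne_top)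
  rw [one_mul] at hr
  refine le_of_tendsto_of_tendsto (ENNReal.Tendsto.mul hx (Or.inl hx0) hz (Or.inl hz0)) hr ?_
  filter_upwards [eventually_ne_atTop 0] with a ha
  have ha' : (a : ℝ) ≠ 0 := by exact_mod_cast ha
  have hpos : (0 : ℝ) ≤ 1 / (a : ℝ) := by positivity
  have hexp : ((diagRamsey (a + a) (k + 1) : ℝ≥0∞) ^ (1 / ((a + a : ℕ) : ℝ))) ^ 2
      = (diagRamsey (a + a) (k + 1) : ℝ≥0∞) ^ (1 / (a : ℝ)) := by
    rw [← ENNReal.rpow_natCast, ← ENNReal.rpow_mul]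
    congr 1
    push_cast
    field_simp
    norm_num
  simp only [Function.comp_apply]
  rw [hexp, ← ENNReal.mul_rpow_of_nonneg _ _ hpos, ← ENNReal.mul_rpow_of_nonneg _ _ hpos]
  exact ENNReal.rpow_le_rpow (by exact_mod_cast hDC.diagRamsey_mul_le hk ha) hpos

/-- if DC holds and `L_3` is finite, then `L_k < L_{k+1}` for every
`k ≥ 3`, where `L j` is the limit of `r ↦ R_r(j)^{1/r}` in `[0, ∞]`. -/
theorem stmt14 (hDC : DC) (L : ℕ → ℝ≥0∞)
    (hL : ∀ j, 2 ≤ j →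
      Tendsto (fun r : ℕ => ((diagRamsey r j : ℝ≥0∞)) ^ (1 / (r : ℝ))) atTop (𝓝 (L j)))
    (h3 : L 3 ≠ ⊤) :
    ∀ k, 3 ≤ k → L k < L (k + 1) := by
  have hlow : ∀ j : ℕ, 1 ≤ j → (j : ℝ≥0∞) ≤ L (j + 1) := fun j hj =>
    natCast_le_of_tendsto_diagRamsey (hL (j + 1) (by omega))
  have hne : ∀ j, 2 ≤ j → L j ≠ 0 := fun j hj h0 => by
    obtain ⟨m, rfl⟩ : ∃ m, j = m + 1 := ⟨j - 1, by omega⟩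
    have h := hlow m (by omega)
    rw [h0] at h
    simp at h
    omega
  have hconc : ∀ j, 2 ≤ j → L j * L (j + 2) ≤ L (j + 1) ^ 2 := fun j hj =>
    hDC.mul_le_sq hj (hL j hj) (hL (j + 1) (by omega)) (hL (j + 2) (by omega))
  have hfin : ∀ j, 3 ≤ j → L j ≠ ⊤ := by
    intro j hj
    induction j, hj using Nat.le_induction with
    | base => exact h3
    | succ j hj ih =>
      obtain ⟨m, rfl⟩ : ∃ m, j = m + 1 := ⟨j - 1, by omega⟩
      intro htop
      have h := hconc m (by omega)
      rw [show m + 2 = m + 1 + 1 from rfl, htop, ENNReal.mul_top (hne m (by omega)), top_le_iff] at h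
      exact ENNReal.pow_ne_top ih h
  intro k hk
  by_contra! hle
  have hanti : ∀ j, k ≤ j → L (j + 1) ≤ L j := by
    intro j hj
    induction j, hj using Nat.le_induction with
    | base => exact hle
    | succ j hj ih =>
      refine (ENNReal.mul_le_mul_iff_right (hne j (by omega)) (hfin j (by omega))).mp ?_
      calc L j * L (j + 2) ≤ L (j + 1) ^ 2 := hconc j (by omega)
        _ = L (j + 1) * L (j + 1) := sq _
        _ ≤ L j * L (j + 1) := by gcongr
  have hbound : ∀ j, k ≤ j → L j ≤ L k := by
    intro j hj
    induction j, hj using Nat.le_induction with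
    | base => exact le_rfl
    | succ j hj ih => exact (hanti j hj).trans ih
  obtain ⟨n, hn⟩ := ENNReal.exists_nat_gt (hfin k hk)
  have h1 : ((n + k : ℕ) : ℝ≥0∞) ≤ L k := (hlow (n + k) (by omega)).trans (hbound _ (by omega))
  have h2 : (n : ℝ≥0∞) ≤ ((n + k : ℕ) : ℝ≥0∞) := by exact_mod_cast Nat.le_add_right n k
  exact absurd hn (not_lt.mpr (h2.trans h1))
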